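/- Assume C is an n×n nonnegative irreducible matrix whose first column is positive (C_{i1} > 0 for all i). Then for every ε with 0 < ε < 1/2 there exists δ > 0, depending only on C and ε, such that for every admissible weight function g with L⁻(g) ≥ δ, the map u_g has a fixed point in Σ_ε = {x ∈ Σ : x₁ ≥ 1 − ε}. -/

import Mathlib

open Set Matrix

/-- An admissible weight function. -/
def IsAdmissible (g g' : ℝ → ℝ) : Prop :=
  (∀ x ∈ Set.Icc (0:ℝ) 1, HasDerivWithinAt g (g' x) (Set.Icc (0:ℝ) 1) x) ∧
  ContinuousOn g' (Set.Icc (0:ℝ) 1) ∧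
  g 0 = 1 ∧
  (∀ x ∈ Set.Icc (0:ℝ) 1, 0 < g x) ∧
  (∀ x ∈ Set.Icc (0:ℝ) 1, 0 < g' x)

/-- The set of values `g'(x)/g(x)` for `x ∈ [0,1]`; its minimum is `L⁻(g)`. -/
def ratioSet (g g' : ℝ → ℝ) : Set ℝ := (fun x => g' x / g x) '' Set.Icc (0:ℝ) 1

/-- `C` is irreducible. -/
def IsIrred {n : ℕ} (C : Matrix (Fin n) (Fin n) ℝ) : Prop :=
  ∀ i j : Fin n, ∃ m : ℕ, 0 < m ∧ 0 < (C ^ m) i j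

/-- The stochastic matrix `M_g(x)`. -/
noncomputable def Mg {n : ℕ} (C : Matrix (Fin n) (Fin n) ℝ) (g : ℝ → ℝ)
    (x : Fin n → ℝ) : Matrix (Fin n) (Fin n) ℝ :=
  Matrix.of fun i j => C i j * g (x j) / ∑ k, C i k * g (x k)

/-!
If `L⁻(g)` is large, then `g` at the first coordinate of a point `x ∈ Σ_ε` exceeds `g` at all
the others by a factor of at least `exp (L⁻(g) (1 - 2ε))`. As the first column of `C` is positive,
every row of `M_g(x)` then lies in `Σ_ε`, so `x ↦ x M_g(x)` maps the compact convex set `Σ_ε` to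
itself, and a fixed point of this map is its own invariant measure, that is, a fixed point of `u_g`.

Brouwer's theorem is obtained by the method of Milnor and Rogers. If `r` were a `C¹` retraction of
the unit ball onto the sphere, the integral over the ball of `det (id + t (Dr - id))`, a polynomial
in `t`, would be the volume of the ball for all small `t ≥ 0`, since `x + t (r x - x)` is then a
bijection of the ball; hence also for `t = 1`, where the integrand vanishes.
-/

open Filter Function MeasureTheory Metric
open scoped NNReal Polynomial Topology InnerProductSpace

/-! ### Volume of a convex domain under maps fixing its boundary -/

section Determinant

theorem exists_polynomial_eval_eq_det_id_add_smul {R V : Type*} [CommRing R] [Nontrivial R]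
    [AddCommGroup V] [Module R V] [Module.Free R V] [Module.Finite R V] (A : V →ₗ[R] V) :
    ∃ p : R[X], p.natDegree ≤ Module.finrank R V ∧
      ∀ t, p.eval t = LinearMap.det (LinearMap.id + t • A) := by
  classical
  let b := Module.finBasis R V
  let M := LinearMap.toMatrix b b A
  refine ⟨((Polynomial.X : R[X]) • M.map Polynomial.C +
    (1 : Matrix (Fin _) (Fin _) R).map Polynomial.C).det, ?_, fun t ↦ ?_⟩
  · simpa only [Fintype.card_fin] using Polynomial.natDegree_det_X_add_C_le M 1
  · rw [← LinearMap.det_toMatrix b, ← Polynomial.coe_evalRingHom, RingHom.map_det]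
    congr 1
    ext i j
    simp [M, Matrix.one_apply, apply_ite (Polynomial.eval t), mul_comm t,
      add_comm]

variable {E : Type*} [NormedAddCommGroup E] [NormedSpace ℝ E] [FiniteDimensional ℝ E]

theorem det_id_add_ne_zero_of_norm_lt_one {A : E →L[ℝ] E} (hA : ‖A‖ < 1) :
    (ContinuousLinearMap.id ℝ E + A).det ≠ 0 := by
  have : CompleteSpace E := FiniteDimensional.complete ℝ E
  have hunit : IsUnit (1 - -A) := isUnit_one_sub_of_norm_lt_one (by rwa [norm_neg])
  rw [sub_neg_eq_add] at hunit
  exact ((hunit.map ContinuousLinearMap.toLinearMapRingHom).map LinearMap.det).ne_zero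

theorem det_id_add_pos_of_norm_lt_one {A : E →L[ℝ] E} (hA : ‖A‖ < 1) :
    0 < (ContinuousLinearMap.id ℝ E + A).det := by
  let d : ℝ → ℝ := fun s ↦ (ContinuousLinearMap.id ℝ E + s • A).det
  have hd : ContinuousOn d (Icc 0 1) :=
    (ContinuousLinearMap.continuous_det.comp (by fun_prop)).continuousOn
  have hd0 : d 0 = 1 := by simp [d, ContinuousLinearMap.det]
  have hd1 : d 1 = (ContinuousLinearMap.id ℝ E + A).det := by simp only [d, one_smul]
  by_contra! hneg
  obtain ⟨s, ⟨hs0, hs1⟩, hs⟩ := intermediate_value_Icc' zero_le_one hd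
    (show (0 : ℝ) ∈ Icc (d 1) (d 0) from ⟨hd1 ▸ hneg, hd0 ▸ zero_le_one⟩)
  refine det_id_add_ne_zero_of_norm_lt_one ?_ hs
  calc ‖s • A‖ = s * ‖A‖ := norm_smul_of_nonneg hs0 A
    _ ≤ ‖A‖ := mul_le_of_le_one_left (norm_nonneg A) hs1
    _ < 1 := hA

end Determinant

theorem integral_eval_eq_of_infinite {α : Type*} [MeasurableSpace α] {μ : Measure α}
    {p : α → ℝ[X]} {d : ℕ} (hdeg : ∀ x, (p x).natDegree ≤ d) {T : Set ℝ} (hT : T.Infinite) {c : ℝ}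
    (hint : ∀ t ∈ T, Integrable (fun x ↦ (p x).eval t) μ)
    (hval : ∀ t ∈ T, ∫ x, (p x).eval t ∂μ = c) (s : ℝ) :
    ∫ x, (p x).eval s ∂μ = c := by
  let v : ℕ → ℝ := fun i ↦ hT.natEmbedding T i
  have hv : Injective v := Subtype.val_injective.comp (hT.natEmbedding T).injective
  have hvT (i : ℕ) : v i ∈ T := (hT.natEmbedding T i).2
  let I := Finset.range (d + 1)
  let ℓ : ℕ → ℝ := fun i ↦ (Lagrange.basis I v i).eval s
  have hinterp (x : α) : (p x).eval s = ∑ i ∈ I, (p x).eval (v i) * ℓ i := by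
    have hcard : (p x).degree < I.card := by
      rw [Finset.card_range]
      exact Polynomial.degree_le_natDegree.trans_lt (mod_cast Nat.lt_succ_of_le (hdeg x))
    conv_lhs => rw [Lagrange.eq_interpolate hv.injOn hcard, Lagrange.interpolate_apply,
      Polynomial.eval_finsetSum]
    simp only [Polynomial.eval_mul, Polynomial.eval_C, ℓ]
  have hsum : ∑ i ∈ I, ℓ i = 1 := by
    simp only [ℓ]
    rw [← Polynomial.eval_finsetSum, Lagrange.sum_basis hv.injOn (by simp [I]),
      Polynomial.eval_one]
  calc ∫ x, (p x).eval s ∂μ = ∑ i ∈ I, (∫ x, (p x).eval (v i) ∂μ) * ℓ i := by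
        simp_rw [hinterp]
        rw [integral_finsetSum _ fun i _ ↦ (hint _ (hvT i)).mul_const _]
        simp_rw [integral_mul_const]
    _ = c := by simp_rw [hval _ (hvT _), ← Finset.mul_sum, hsum, mul_one]

section ConvexDomain

variable {E : Type*} [NormedAddCommGroup E] [NormedSpace ℝ E] [FiniteDimensional ℝ E]

theorem approximatesLinearOn_id_add_smul {E : Type*} [NormedAddCommGroup E] [NormedSpace ℝ E]
    {s : Set E} {G : E → E} {K : ℝ≥0} (hG : LipschitzOnWith K G s) {t : ℝ} (ht : 0 ≤ t) :
    ApproximatesLinearOn (fun x ↦ x + t • G x) (ContinuousLinearEquiv.refl ℝ E : E →L[ℝ] E) s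
      (t.toNNReal * K) := by
  rw [ApproximatesLinearOn.approximatesLinearOn_iff_lipschitzOnWith]
  have hsub : (fun x ↦ x + t • G x) - ⇑(ContinuousLinearEquiv.refl ℝ E : E →L[ℝ] E) =
      fun x ↦ t • G x := by
    ext x
    simp
  rw [hsub]
  refine LipschitzOnWith.of_dist_le_mul fun x hx y hy ↦ ?_
  rw [dist_smul₀, Real.norm_of_nonneg ht, NNReal.coe_mul, Real.coe_toNNReal t ht, mul_assoc]
  exact mul_le_mul_of_nonneg_left (hG.dist_le_mul x hx y hy) ht

theorem surjOn_of_isOpen_image_of_eqOn_frontier {X : Type*} [TopologicalSpace X] [T2Space X]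
    {U : Set X} (hopen : IsOpen U) (hconn : IsPreconnected U) (hcomp : IsCompact (closure U))
    {h : X → X} (hcont : ContinuousOn h (closure U)) (himage : IsOpen (h '' U))
    (hmaps : MapsTo h U U) (hid : EqOn h id (frontier U)) : SurjOn h U U := by
  rcases U.eq_empty_or_nonempty with rfl | ⟨x₀, hx₀⟩
  · exact surjOn_empty _ _
  refine hconn.subset_of_closure_inter_subset himage ⟨h x₀, hmaps hx₀, mem_image_of_mem h hx₀⟩ ?_
  rintro y ⟨hy, hyU⟩
  obtain ⟨x, hx, rfl⟩ := closure_minimal (image_mono subset_closure)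
    (hcomp.image_of_continuousOn hcont).isClosed hy
  by_contra hxU
  have hxfr : x ∈ closure U \ U := ⟨hx, fun hx' ↦ hxU (mem_image_of_mem h hx')⟩
  have hfix : h x = x := hid (hopen.frontier_eq ▸ hxfr)
  exact hxfr.2 (hfix ▸ hyU)

theorem bijOn_id_add_smul_of_lipschitzOnWith {U : Set E} (hopen : IsOpen U) (hconv : Convex ℝ U)
    (hbdd : Bornology.IsBounded U) {G : E → E} {K : ℝ≥0} (hG : LipschitzOnWith K G (closure U))
    (hmaps : MapsTo (fun x ↦ x + G x) (closure U) (closure U)) (hzero : EqOn G 0 (frontier U))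
    {t : ℝ} (ht0 : 0 ≤ t) (ht1 : t < 1) (htK : t * K < 1) :
    BijOn (fun x ↦ x + t • G x) U U := by
  have : CompleteSpace E := FiniteDimensional.complete ℝ E
  have happrox := approximatesLinearOn_id_add_smul (hG.mono subset_closure) ht0
  have hconst : Subsingleton E ∨ t.toNNReal * K <
      ‖((ContinuousLinearEquiv.refl ℝ E).symm : E →L[ℝ] E)‖₊⁻¹ := by
    rcases subsingleton_or_nontrivial E with hE | hE
    · exact Or.inl hE
    · right
      rw [ContinuousLinearEquiv.refl_symm, ContinuousLinearEquiv.coe_refl,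
        ContinuousLinearMap.nnnorm_id, inv_one, ← NNReal.coe_lt_coe, NNReal.coe_mul,
        Real.coe_toNNReal t ht0]
      exact htK
  have hmapsU : MapsTo (fun x ↦ x + t • G x) U U := fun x hx ↦ by
    have hcomb : x + t • G x = (1 - t) • x + t • (x + G x) := by module
    simp only [hcomb]
    rw [← hopen.interior_eq]
    exact hconv.combo_interior_closure_mem_interior (hopen.interior_eq.symm ▸ hx)
      (hmaps (subset_closure hx)) (sub_pos.2 ht1) ht0 (sub_add_cancel 1 t)
  have himage : IsOpen ((fun x ↦ x + t • G x) '' U) :=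
    happrox.open_image (ContinuousLinearEquiv.refl ℝ E).toNonlinearRightInverse hopen hconst
  exact ⟨hmapsU, happrox.injOn hconst,
    surjOn_of_isOpen_image_of_eqOn_frontier hopen hconv.isPreconnected hbdd.isCompact_closure
      (continuousOn_id.add (hG.continuousOn.const_smul t)) himage hmapsU
      fun x hx ↦ by simp [hzero hx]⟩

theorem integral_det_id_add_smul_eq_measureReal [MeasurableSpace E] [BorelSpace E]
    (μ : Measure E) [μ.IsAddHaarMeasure] {U : Set E} (hopen : IsOpen U) (hconv : Convex ℝ U)
    (hbdd : Bornology.IsBounded U) {G : E → E} {A : E → E →L[ℝ] E} {K : ℝ≥0}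
    (hderiv : ∀ x ∈ closure U, HasFDerivWithinAt G (A x) (closure U) x)
    (hA : ∀ x ∈ closure U, ‖A x‖₊ ≤ K)
    (hmaps : MapsTo (fun x ↦ x + G x) (closure U) (closure U)) (hzero : EqOn G 0 (frontier U))
    {t : ℝ} (ht0 : 0 ≤ t) (ht1 : t < 1) (htK : t * K < 1) :
    ∫ x in U, (ContinuousLinearMap.id ℝ E + t • A x).det ∂μ = μ.real U := by
  have hbij : BijOn (fun x ↦ x + t • G x) U U :=
    bijOn_id_add_smul_of_lipschitzOnWith hopen hconv hbdd
      (hconv.closure.lipschitzOnWith_of_nnnorm_hasFDerivWithin_le hderiv hA) hmaps hzero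
      ht0 ht1 htK
  have hderiv' (x : E) (hx : x ∈ U) : HasFDerivWithinAt (fun x ↦ x + t • G x)
      (ContinuousLinearMap.id ℝ E + t • A x) U x :=
    (hasFDerivWithinAt_id x U).add
      (((hderiv x (subset_closure hx)).mono subset_closure).const_smul t)
  have hpos (x : E) (hx : x ∈ U) : 0 < (ContinuousLinearMap.id ℝ E + t • A x).det := by
    refine det_id_add_pos_of_norm_lt_one ?_
    calc ‖t • A x‖ = t * ‖A x‖ := norm_smul_of_nonneg ht0 (A x)
      _ ≤ t * K := mul_le_mul_of_nonneg_left (hA x (subset_closure hx)) ht0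
      _ < 1 := htK
  calc ∫ x in U, (ContinuousLinearMap.id ℝ E + t • A x).det ∂μ
      = ∫ x in U, |(ContinuousLinearMap.id ℝ E + t • A x).det| • (1 : ℝ) ∂μ :=
        setIntegral_congr_fun hopen.measurableSet fun x hx ↦ by
          simp only [abs_of_pos (hpos x hx), smul_eq_mul, mul_one]
    _ = ∫ _ in (fun x ↦ x + t • G x) '' U, (1 : ℝ) ∂μ :=
        (integral_image_eq_integral_abs_det_fderiv_smul μ hopen.measurableSet hderiv'
          hbij.injOn fun _ ↦ 1).symm
    _ = μ.real U := by rw [hbij.image_eq, setIntegral_const, smul_eq_mul, mul_one]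

theorem integral_det_fderiv_eq_measureReal [MeasurableSpace E] [BorelSpace E]
    (μ : Measure E) [μ.IsAddHaarMeasure] {U : Set E} (hopen : IsOpen U) (hconv : Convex ℝ U)
    (hbdd : Bornology.IsBounded U) {f : E → E} {f' : E → E →L[ℝ] E}
    (hderiv : ∀ x ∈ closure U, HasFDerivWithinAt f (f' x) (closure U) x)
    (hcont : ContinuousOn f' (closure U)) (hmaps : MapsTo f (closure U) (closure U))
    (hid : EqOn f id (frontier U)) :
    ∫ x in U, (f' x).det ∂μ = μ.real U := by
  let G : E → E := fun x ↦ f x - x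
  let A : E → E →L[ℝ] E := fun x ↦ f' x - ContinuousLinearMap.id ℝ E
  have hAcont : ContinuousOn A (closure U) := hcont.sub continuousOn_const
  obtain ⟨K, hK⟩ := hbdd.isCompact_closure.exists_bound_of_continuousOn hAcont
  have hAK (x : E) (hx : x ∈ closure U) : ‖A x‖₊ ≤ K.toNNReal :=
    NNReal.coe_le_coe.1 ((hK x hx).trans (Real.le_coe_toNNReal K))
  choose p hdeg hp using fun x ↦ exists_polynomial_eval_eq_det_id_add_smul (A x : E →ₗ[ℝ] E)
  replace hp (x : E) (t : ℝ) :
      (p x).eval t = (ContinuousLinearMap.id ℝ E + t • A x).det := hp x t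
  have hint (t : ℝ) : IntegrableOn (fun x ↦ (p x).eval t) U μ := by
    simp only [hp]
    exact ((ContinuousLinearMap.continuous_det.comp_continuousOn
      (continuousOn_const.add (hAcont.const_smul t))).integrableOn_compact
        hbdd.isCompact_closure).mono_set subset_closure
  let T : Set ℝ := Ico 0 (1 / (K.toNNReal + 1))
  have hT : T.Infinite := Ico_infinite (by positivity)
  have hsmall (t : ℝ) (ht : t ∈ T) : ∫ x in U, (p x).eval t ∂μ = μ.real U := by
    simp only [hp]
    have htK : t * (K.toNNReal + 1) < 1 := (lt_div_iff₀ (by positivity)).1 ht.2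
    have htK0 : 0 ≤ t * K.toNNReal := mul_nonneg ht.1 K.toNNReal.2
    exact integral_det_id_add_smul_eq_measureReal μ hopen hconv hbdd (G := G)
      (fun x hx ↦ (hderiv x hx).sub (hasFDerivWithinAt_id x _)) hAK
      (by simpa only [G, add_sub_cancel] using hmaps)
      (fun x hx ↦ sub_eq_zero.2 (hid hx)) ht.1 (by linarith [ht.1]) (by linarith [ht.1])
  have hone := integral_eval_eq_of_infinite hdeg hT (fun t _ ↦ hint t) hsmall 1
  simpa only [hp, one_smul, A, add_sub_cancel] using hone

end ConvexDomain

/-! ### Brouwer's fixed point theorem -/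

section Retraction

variable {E : Type*} [NormedAddCommGroup E] [InnerProductSpace ℝ E] [FiniteDimensional ℝ E]

theorem det_fderiv_eq_zero_of_eventually_norm_eq {f : E → E} {f' : E →L[ℝ] E} {x : E} {c : ℝ}
    (hf : HasFDerivAt f f' x) (hc : c ≠ 0) (hnorm : ∀ᶠ y in 𝓝 x, ‖f y‖ = c) : f'.det = 0 := by
  by_contra hdet
  obtain ⟨w, hw⟩ := (LinearMap.equivOfDetNeZero (f' : E →ₗ[ℝ] E) hdet).surjective (f x)
  have hw : f' w = f x := hw
  have hconst : (fun y ↦ ‖f y‖ ^ 2) =ᶠ[𝓝 x] fun _ ↦ c ^ 2 :=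
    hnorm.mono fun y hy ↦ by simp only [hy]
  have hzero := hf.norm_sq.unique ((hasFDerivAt_const (c ^ 2) x).congr_of_eventuallyEq hconst)
  have happ := congrArg (fun T : E →L[ℝ] ℝ ↦ T w) hzero
  simp [hw, hnorm.self_of_nhds, hc] at happ

theorem no_contDiff_retraction_onto_sphere {r : E → E}
    (hr : ∀ x ∈ closedBall (0 : E) 1, ContDiffAt ℝ 1 r x)
    (hmaps : MapsTo r (closedBall 0 1) (sphere 0 1)) (hid : EqOn r id (sphere 0 1)) : False := by
  borelize E
  have hclosure : closure (ball (0 : E) 1) = closedBall 0 1 := closure_ball 0 one_ne_zero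
  have hderiv (x : E) (hx : x ∈ closedBall (0 : E) 1) : HasFDerivAt r (fderiv ℝ r x) x :=
    ((hr x hx).differentiableAt one_ne_zero).hasFDerivAt
  have hvol : ∫ x in ball (0 : E) 1, (fderiv ℝ r x).det = volume.real (ball (0 : E) 1) := by
    refine integral_det_fderiv_eq_measureReal volume isOpen_ball (convex_ball 0 1)
      isBounded_ball (f := r) ?_ ?_ ?_ ?_
    · exact fun x hx ↦ (hderiv x (hclosure ▸ hx)).hasFDerivWithinAt
    · exact fun x hx ↦ ((hr x (hclosure ▸ hx)).fderiv_right (m := 0)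
        (by simp)).continuousAt.continuousWithinAt
    · exact hclosure.symm ▸ hmaps.mono_right sphere_subset_closedBall
    · rwa [frontier_ball 0 one_ne_zero]
  have hzero : ∫ x in ball (0 : E) 1, (fderiv ℝ r x).det = 0 :=
    setIntegral_eq_zero_of_forall_eq_zero fun x hx ↦
      det_fderiv_eq_zero_of_eventually_norm_eq (hderiv x (ball_subset_closedBall hx)) one_ne_zero
        (by filter_upwards [isOpen_ball.mem_nhds hx] with y hy using
          mem_sphere_zero_iff_norm.1 (hmaps (ball_subset_closedBall hy)))
  have hpos : 0 < volume.real (ball (0 : E) 1) :=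
    ENNReal.toReal_pos (measure_ball_pos volume 0 one_pos).ne' measure_ball_lt_top.ne
  exact hpos.ne' (hvol.symm.trans hzero)

end Retraction

section RayExit

variable {E : Type*} [NormedAddCommGroup E] [InnerProductSpace ℝ E]

/-- A quarter of the discriminant of the quadratic equation `‖x + t • v‖ ^ 2 = 1` in `t`. -/
def rayExitDiscrim (x v : E) : ℝ :=
  ⟪x, v⟫_ℝ ^ 2 + ‖v‖ ^ 2 * (1 - ‖x‖ ^ 2)

/-- The point at which the ray from `x` in the direction `v` leaves the closed unit ball; it is
`x + t • v` for the larger root `t` of `‖x + t • v‖ ^ 2 = 1`. The formula is meaningful for `v ≠ 0`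
and `‖x‖ ≤ 1`. -/
noncomputable def rayExit (x v : E) : E :=
  x + ((-⟪x, v⟫_ℝ + √(rayExitDiscrim x v)) / ‖v‖ ^ 2) • v

theorem rayExitDiscrim_nonneg {x : E} (hx : ‖x‖ ≤ 1) (v : E) : 0 ≤ rayExitDiscrim x v :=
  add_nonneg (sq_nonneg _)
    (mul_nonneg (sq_nonneg _) (sub_nonneg.2 (pow_le_one₀ (norm_nonneg x) hx)))

theorem rayExitDiscrim_pos {x v : E} (hx : ‖x‖ ≤ 1) (hv : v ≠ 0)
    (hxv : ‖x‖ = 1 → 0 < ⟪x, v⟫_ℝ) : 0 < rayExitDiscrim x v := by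
  rcases hx.lt_or_eq with hlt | heq
  · have hx2 : 0 < 1 - ‖x‖ ^ 2 := sub_pos.2 (pow_lt_one₀ (norm_nonneg x) hlt two_ne_zero)
    exact add_pos_of_nonneg_of_pos (sq_nonneg _)
      (mul_pos (pow_pos (norm_pos_iff.2 hv) 2) hx2)
  · have hdiscrim : rayExitDiscrim x v = ⟪x, v⟫_ℝ ^ 2 := by simp [rayExitDiscrim, heq]
    exact hdiscrim ▸ pow_pos (hxv heq) 2

theorem norm_rayExit {x v : E} (hx : ‖x‖ ≤ 1) (hv : v ≠ 0) : ‖rayExit x v‖ = 1 := by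
  rw [← sq_eq_sq₀ (norm_nonneg _) zero_le_one, rayExit, norm_add_sq_real, inner_smul_right,
    norm_smul, mul_pow, Real.norm_eq_abs, sq_abs]
  have hsqrt := Real.sq_sqrt (rayExitDiscrim_nonneg hx v)
  set s := √(rayExitDiscrim x v)
  rw [rayExitDiscrim] at hsqrt
  have hv' : ‖v‖ ≠ 0 := norm_ne_zero_iff.2 hv
  field_simp
  linear_combination hsqrt

theorem rayExit_eq_self {x v : E} (hx : ‖x‖ = 1) (hxv : 0 ≤ ⟪x, v⟫_ℝ) : rayExit x v = x := by
  have hdiscrim : rayExitDiscrim x v = ⟪x, v⟫_ℝ ^ 2 := by simp [rayExitDiscrim, hx]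
  simp [rayExit, hdiscrim, Real.sqrt_sq hxv]

theorem contDiffAt_rayExit {w : E → E} {x : E} (hw : ContDiff ℝ 1 w) (hwx : w x ≠ 0)
    (hdiscrim : rayExitDiscrim x (w x) ≠ 0) : ContDiffAt ℝ 1 (fun y ↦ rayExit y (w y)) x := by
  have hinner : ContDiff ℝ 1 fun y ↦ ⟪y, w y⟫_ℝ := contDiff_id.inner ℝ hw
  have hnorm : ContDiff ℝ 1 fun y ↦ ‖w y‖ ^ 2 := hw.norm_sq ℝ
  have hroot : ContDiffAt ℝ 1 (fun y ↦ √(rayExitDiscrim y (w y))) x :=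
    (((hinner.pow 2).add (hnorm.mul (contDiff_const.sub (contDiff_id.norm_sq ℝ)))).contDiffAt).sqrt
      hdiscrim
  exact contDiffAt_id.add (((hinner.contDiffAt.neg.add hroot).div hnorm.contDiffAt
    (pow_ne_zero 2 (norm_ne_zero_iff.2 hwx))).smul hw.contDiffAt)

end RayExit

section Ball

variable {E : Type*} [NormedAddCommGroup E] [InnerProductSpace ℝ E] [FiniteDimensional ℝ E]

theorem exists_isFixedPt_of_contDiff {f : E → E} (hf : ContDiff ℝ 1 f)
    (hmaps : MapsTo f (closedBall 0 1) (ball 0 1)) : ∃ x ∈ closedBall 0 1, IsFixedPt f x := by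
  by_contra! hne
  have hdir (x : E) (hx : x ∈ closedBall (0 : E) 1) : x - f x ≠ 0 :=
    sub_ne_zero.2 fun h ↦ hne x hx h.symm
  have hinner (x : E) (hx : ‖x‖ = 1) : 0 < ⟪x, x - f x⟫_ℝ := by
    have hfx : ‖f x‖ < 1 := mem_ball_zero_iff.1 (hmaps (mem_closedBall_zero_iff.2 hx.le))
    have hle : ⟪x, f x⟫_ℝ ≤ ‖f x‖ := by simpa only [hx, one_mul] using real_inner_le_norm x (f x)
    rw [inner_sub_right, real_inner_self_eq_norm_sq, hx]
    linarith
  refine no_contDiff_retraction_onto_sphere (r := fun x ↦ rayExit x (x - f x)) ?_ ?_ ?_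
  · intro x hx
    exact contDiffAt_rayExit (contDiff_id.sub hf) (hdir x hx)
      (rayExitDiscrim_pos (mem_closedBall_zero_iff.1 hx) (hdir x hx) (hinner x)).ne'
  · exact fun x hx ↦ mem_sphere_zero_iff_norm.2
      (norm_rayExit (mem_closedBall_zero_iff.1 hx) (hdir x hx))
  · exact fun x hx ↦ rayExit_eq_self (mem_sphere_zero_iff_norm.1 hx)
      (hinner x (mem_sphere_zero_iff_norm.1 hx)).le

theorem exists_norm_sub_lt_of_continuous {f : E → E} (hf : Continuous f) (hf1 : ∀ x, ‖f x‖ ≤ 1)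
    {η : ℝ} (hη : 0 < η) : ∃ x ∈ closedBall 0 1, ‖f x - x‖ < η := by
  obtain ⟨q, hq, hqf, -⟩ := hf.exists_contDiff_approx 1 (ε := fun _ ↦ η / 2) continuous_const
    fun _ ↦ half_pos hη
  have hc : 0 < 1 + η / 2 := by positivity
  have hq1 (x : E) : ‖q x‖ < 1 + η / 2 :=
    calc ‖q x‖ ≤ ‖f x‖ + ‖q x - f x‖ := norm_le_norm_add_norm_sub' _ _
      _ < 1 + η / 2 := add_lt_add_of_le_of_lt (hf1 x) (dist_eq_norm (q x) (f x) ▸ hqf x)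
  obtain ⟨x, hx, hfix⟩ := exists_isFixedPt_of_contDiff (f := fun x ↦ (1 + η / 2)⁻¹ • q x)
    (hq.const_smul _) fun x _ ↦ by
      rw [mem_ball_zero_iff, norm_smul_of_nonneg (by positivity), inv_mul_lt_iff₀ hc, mul_one]
      exact hq1 x
  have hqx : q x - x = (η / 2) • x := by
    have hqx : q x = (1 + η / 2) • x := (inv_smul_eq_iff₀ hc.ne').1 hfix
    rw [hqx]
    module
  refine ⟨x, hx, ?_⟩
  calc ‖f x - x‖ ≤ ‖f x - q x‖ + ‖q x - x‖ := norm_sub_le_norm_sub_add_norm_sub _ _ _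
    _ = dist (q x) (f x) + η / 2 * ‖x‖ := by
        rw [hqx, norm_smul_of_nonneg (by positivity), dist_comm, dist_eq_norm]
    _ < η / 2 + η / 2 * 1 := add_lt_add_of_lt_of_le (hqf x)
        (mul_le_mul_of_nonneg_left (mem_closedBall_zero_iff.1 hx) (by positivity))
    _ = η := by ring

theorem exists_isFixedPt_of_continuous_of_norm_le_one {f : E → E} (hf : Continuous f)
    (hf1 : ∀ x, ‖f x‖ ≤ 1) : ∃ x, IsFixedPt f x := by
  obtain ⟨x, -, hmin⟩ := (isCompact_closedBall (0 : E) 1).exists_isMinOn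
    (nonempty_closedBall.2 zero_le_one) (hf.sub continuous_id).norm.continuousOn
  refine ⟨x, ?_⟩
  by_contra hne
  obtain ⟨y, hy, hlt⟩ := exists_norm_sub_lt_of_continuous hf hf1
    (norm_pos_iff.2 (sub_ne_zero.2 hne))
  exact (hmin hy).not_gt hlt

theorem exists_isFixedPt_of_continuous_of_norm_le {f : E → E} (hf : Continuous f) {R : ℝ}
    (hR : 0 < R) (hfR : ∀ x, ‖f x‖ ≤ R) : ∃ x, IsFixedPt f x := by
  obtain ⟨x, hx⟩ := exists_isFixedPt_of_continuous_of_norm_le_one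
    (f := fun x ↦ R⁻¹ • f (R • x)) (by fun_prop) fun x ↦ by
      rw [norm_smul_of_nonneg (inv_nonneg.2 hR.le), inv_mul_le_iff₀ hR, mul_one]
      exact hfR _
  exact ⟨R • x, (inv_smul_eq_iff₀ hR.ne').1 hx⟩

end Ball

theorem exists_lipschitzWith_one_retraction {E : Type*} [NormedAddCommGroup E]
    [InnerProductSpace ℝ E] {K : Set E} (hne : K.Nonempty) (hcomplete : IsComplete K)
    (hconv : Convex ℝ K) : ∃ P : E → E, LipschitzWith 1 P ∧ (∀ x, P x ∈ K) ∧ EqOn P id K := by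
  choose P hPK hPmin using exists_norm_eq_iInf_of_complete_convex hne hcomplete hconv
  have hP (x w : E) (hw : w ∈ K) : ⟪x - P x, w - P x⟫_ℝ ≤ 0 :=
    (norm_eq_iInf_iff_real_inner_le_zero hconv (hPK x)).1 (hPmin x) w hw
  refine ⟨P, LipschitzWith.of_dist_le_mul fun x y ↦ ?_, hPK, fun x hx ↦ ?_⟩
  · have hsq : ‖P x - P y‖ * ‖P x - P y‖ ≤ ‖x - y‖ * ‖P x - P y‖ :=
      calc ‖P x - P y‖ * ‖P x - P y‖
          = ⟪x - y, P x - P y⟫_ℝ + (⟪x - P x, P y - P x⟫_ℝ + ⟪y - P y, P x - P y⟫_ℝ) := by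
            rw [← real_inner_self_eq_norm_mul_norm, ← neg_sub (P x) (P y), inner_neg_right]
            simp only [inner_sub_left]
            ring
        _ ≤ ⟪x - y, P x - P y⟫_ℝ :=
            add_le_of_nonpos_right (add_nonpos (hP x _ (hPK y)) (hP y _ (hPK x)))
        _ ≤ ‖x - y‖ * ‖P x - P y‖ := real_inner_le_norm _ _
    rw [NNReal.coe_one, one_mul, dist_eq_norm, dist_eq_norm]
    rcases (norm_nonneg (P x - P y)).eq_or_lt with hzero | hpos
    · exact hzero ▸ norm_nonneg _
    · exact le_of_mul_le_mul_right hsq hpos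
  · have hself := hP x x hx
    rw [real_inner_self_nonpos, sub_eq_zero] at hself
    exact hself.symm

theorem exists_isFixedPt_of_isCompact_of_convex_of_inner {E : Type*} [NormedAddCommGroup E]
    [InnerProductSpace ℝ E] [FiniteDimensional ℝ E] {K : Set E} (hcomp : IsCompact K)
    (hconv : Convex ℝ K) (hne : K.Nonempty) {f : E → E} (hf : ContinuousOn f K)
    (hmaps : MapsTo f K K) : ∃ x ∈ K, IsFixedPt f x := by
  obtain ⟨P, hPlip, hPK, hPid⟩ := exists_lipschitzWith_one_retraction hne hcomp.isComplete hconv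
  obtain ⟨R, hR, hKR⟩ := hcomp.isBounded.exists_pos_norm_le
  obtain ⟨x, hx⟩ := exists_isFixedPt_of_continuous_of_norm_le (f := f ∘ P)
    (hf.comp_continuous hPlip.continuous hPK) hR fun x ↦ hKR _ (hmaps (hPK x))
  have hxK : x ∈ K := hx ▸ hmaps (hPK x)
  exact ⟨x, hxK, (congrArg f (hPid hxK)).symm.trans hx⟩

theorem exists_isFixedPt_of_isCompact_of_convex {E : Type*} [AddCommGroup E] [Module ℝ E]
    [TopologicalSpace E] [IsTopologicalAddGroup E] [ContinuousSMul ℝ E] [T2Space E]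
    [FiniteDimensional ℝ E] {K : Set E} (hcomp : IsCompact K) (hconv : Convex ℝ K)
    (hne : K.Nonempty) {f : E → E} (hf : ContinuousOn f K) (hmaps : MapsTo f K K) :
    ∃ x ∈ K, IsFixedPt f x := by
  let e : E ≃L[ℝ] EuclideanSpace ℝ (Fin (Module.finrank ℝ E)) := toEuclidean
  obtain ⟨_, ⟨x, hx, rfl⟩, hfix⟩ := exists_isFixedPt_of_isCompact_of_convex_of_inner
    (K := e '' K) (f := e ∘ f ∘ e.symm) (hcomp.image e.continuous)
    (hconv.linear_image e.toLinearMap) (hne.image e)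
    (e.continuous.comp_continuousOn (hf.comp e.symm.continuous.continuousOn
      (by rintro _ ⟨x, hx, rfl⟩; rwa [e.symm_apply_apply])))
    (by rintro _ ⟨x, hx, rfl⟩; exact ⟨f x, hmaps hx, by simp⟩)
  exact ⟨x, hx, e.injective (by simpa [IsFixedPt] using hfix)⟩

/-! ### Fixed points near a vertex of the simplex -/

section ExponentialGrowth

theorem le_exp_neg_mul_of_mul_le_deriv {g g' : ℝ → ℝ} {a b δ : ℝ} (hab : a ≤ b)
    (hcont : ContinuousOn g (Icc a b)) (hderiv : ∀ x ∈ Ioo a b, HasDerivAt g (g' x) x)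
    (hle : ∀ x ∈ Ioo a b, δ * g x ≤ g' x) : g a ≤ Real.exp (-(δ * (b - a))) * g b := by
  have hmono : MonotoneOn (fun x ↦ Real.exp (-(δ * (x - a))) * g x) (Icc a b) := by
    refine monotoneOn_of_hasDerivWithinAt_nonneg (convex_Icc a b)
      (f' := fun x ↦ Real.exp (-(δ * (x - a))) * (g' x - δ * g x))
      ((by fun_prop : Continuous fun x ↦ Real.exp (-(δ * (x - a)))).continuousOn.mul hcont) ?_ ?_
    · rw [interior_Icc]
      intro x hx
      have hexp : HasDerivAt (fun x ↦ Real.exp (-(δ * (x - a))))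
          (Real.exp (-(δ * (x - a))) * -(δ * 1)) x :=
        (((hasDerivAt_id x).sub_const a).const_mul δ).neg.exp
      exact ((hexp.mul (hderiv x hx)).congr_deriv (by ring)).hasDerivWithinAt
    · rw [interior_Icc]
      exact fun x hx ↦ mul_nonneg (Real.exp_pos _).le (sub_nonneg.2 (hle x hx))
  simpa using hmono (left_mem_Icc.2 hab) (right_mem_Icc.2 hab) hab

theorem exists_pos_forall_exp_neg_mul_mul_le {ι : Type*} [Finite ι] (a : ι → ℝ) {b : ι → ℝ}
    (hb : ∀ i, 0 < b i) {c : ℝ} (hc : 0 < c) :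
    ∃ δ > 0, ∀ i, Real.exp (-(δ * c)) * a i ≤ b i := by
  have htendsto (i : ι) : Tendsto (fun δ ↦ Real.exp (-(δ * c)) * a i) atTop (𝓝 0) :=
    zero_mul (a i) ▸ (Real.tendsto_exp_neg_atTop_nhds_zero.comp
      (tendsto_id.atTop_mul_const hc)).mul_const (a i)
  have hevent : ∀ᶠ δ in atTop, ∀ i, Real.exp (-(δ * c)) * a i ≤ b i :=
    eventually_all.2 fun i ↦ (htendsto i).eventually_le_const (hb i)
  exact ((eventually_gt_atTop 0).and hevent).exists

end ExponentialGrowth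

section Markov

variable {ι : Type*} [Fintype ι]

/-- The matrix `C` with its columns weighted by `w` and its rows then normalised to sum to one, so
that `Mg C g x = reweight C (g ∘ x)`. A row of `C` with `∑ k, C i k * w k = 0` becomes zero. -/
noncomputable def reweight (C : Matrix ι ι ℝ) (w : ι → ℝ) : Matrix ι ι ℝ :=
  Matrix.of fun i j ↦ C i j * w j / ∑ k, C i k * w k

/-- The part `Σ_ε` of the standard simplex near its vertex `i₀`. -/
def nearVertex (i₀ : ι) (ε : ℝ) : Set (ι → ℝ) :=
  {x ∈ stdSimplex ℝ ι | 1 - ε ≤ x i₀}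

theorem nearVertex_subset_nearVertex (i₀ : ι) {ε η : ℝ} (hεη : ε ≤ η) :
    nearVertex i₀ ε ⊆ nearVertex i₀ η :=
  fun _ hx ↦ ⟨hx.1, (sub_le_sub_left hεη 1).trans hx.2⟩

theorem convex_nearVertex (i₀ : ι) (ε : ℝ) : Convex ℝ (nearVertex i₀ ε) :=
  (convex_stdSimplex ℝ ι).inter
    (convex_halfSpace_ge (f := fun x : ι → ℝ ↦ x i₀) (LinearMap.proj i₀).isLinear (1 - ε))

theorem isCompact_nearVertex (i₀ : ι) (ε : ℝ) : IsCompact (nearVertex i₀ ε) :=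
  (isCompact_stdSimplex ℝ ι).inter_right (isClosed_le continuous_const (continuous_apply i₀))

theorem nearVertex_nonempty (i₀ : ι) {ε : ℝ} (hε : 0 ≤ ε) : (nearVertex i₀ ε).Nonempty := by
  classical
  exact ⟨Pi.single i₀ 1, single_mem_stdSimplex ℝ i₀, by simpa using hε⟩

theorem apply_le_of_mem_nearVertex {i₀ : ι} {ε : ℝ} {x : ι → ℝ} (hx : x ∈ nearVertex i₀ ε) {k : ι}
    (hk : k ≠ i₀) : x k ≤ ε := by
  classical
  have hpair : x k + x i₀ ≤ 1 := by
    rw [← hx.1.2, ← Finset.sum_pair hk]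
    exact Finset.sum_le_univ_sum_of_nonneg hx.1.1
  linarith [hx.2]

theorem vecMul_mem_of_convex {κ : Type*} {K : Set (κ → ℝ)} (hK : Convex ℝ K) {x : ι → ℝ}
    (hx : x ∈ stdSimplex ℝ ι) {M : Matrix ι κ ℝ} (hM : ∀ i, M i ∈ K) : x ᵥ* M ∈ K := by
  rw [vecMul_eq_sum]
  exact hK.sum_mem (fun i _ ↦ hx.1 i) hx.2 fun i _ ↦ hM i

variable {C : Matrix ι ι ℝ} {i₀ : ι}

theorem sum_mul_pos_of_pos_column (hC : ∀ i j, 0 ≤ C i j) (hcol : ∀ i, 0 < C i i₀) {w : ι → ℝ}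
    (hw : ∀ j, 0 < w j) (i : ι) : 0 < ∑ k, C i k * w k :=
  Finset.sum_pos' (fun k _ ↦ mul_nonneg (hC i k) (hw k).le)
    ⟨i₀, Finset.mem_univ i₀, mul_pos (hcol i) (hw i₀)⟩

theorem reweight_mem_stdSimplex (hC : ∀ i j, 0 ≤ C i j) (hcol : ∀ i, 0 < C i i₀) {w : ι → ℝ}
    (hw : ∀ j, 0 < w j) (i : ι) : reweight C w i ∈ stdSimplex ℝ ι := by
  have hpos := sum_mul_pos_of_pos_column hC hcol hw i
  refine ⟨fun j ↦ div_nonneg (mul_nonneg (hC i j) (hw j).le) hpos.le, ?_⟩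
  simp only [reweight, of_apply]
  rw [← Finset.sum_div, div_self hpos.ne']

theorem reweight_mem_nearVertex (hC : ∀ i j, 0 ≤ C i j) (hcol : ∀ i, 0 < C i i₀) {w : ι → ℝ}
    (hw : ∀ j, 0 < w j) {q ε : ℝ} (hq : 0 ≤ q) (hε : 0 ≤ ε) (hwq : ∀ k ≠ i₀, w k ≤ q * w i₀)
    {i : ι} (hqC : q * ∑ k, C i k ≤ ε * C i i₀) : reweight C w i ∈ nearVertex i₀ ε := by
  classical
  refine ⟨reweight_mem_stdSimplex hC hcol hw i, ?_⟩
  have hq₀ : 0 ≤ q * w i₀ := mul_nonneg hq (hw i₀).le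
  have hfar : ∑ k ∈ {i₀}ᶜ, C i k * w k ≤ ε * (C i i₀ * w i₀) :=
    calc ∑ k ∈ {i₀}ᶜ, C i k * w k ≤ ∑ k ∈ {i₀}ᶜ, C i k * (q * w i₀) :=
          Finset.sum_le_sum fun k hk ↦
            mul_le_mul_of_nonneg_left (hwq k (by simpa using hk)) (hC i k)
      _ ≤ ∑ k, C i k * (q * w i₀) :=
          Finset.sum_le_univ_sum_of_nonneg fun k ↦ mul_nonneg (hC i k) hq₀
      _ = (q * ∑ k, C i k) * w i₀ := by rw [← Finset.sum_mul]; ring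
      _ ≤ (ε * C i i₀) * w i₀ := mul_le_mul_of_nonneg_right hqC (hw i₀).le
      _ = ε * (C i i₀ * w i₀) := mul_assoc _ _ _
  have hle : C i i₀ * w i₀ ≤ ∑ k, C i k * w k :=
    Finset.single_le_sum (fun k _ ↦ mul_nonneg (hC i k) (hw k).le) (Finset.mem_univ i₀)
  change 1 - ε ≤ C i i₀ * w i₀ / ∑ k, C i k * w k
  rw [le_div_iff₀ (sum_mul_pos_of_pos_column hC hcol hw i)]
  linarith [Fintype.sum_eq_add_sum_compl i₀ fun k ↦ C i k * w k,
    mul_le_mul_of_nonneg_left hle hε]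

theorem continuousOn_vecMul_reweight (hC : ∀ i j, 0 ≤ C i j) (hcol : ∀ i, 0 < C i i₀)
    {g : ℝ → ℝ} (hg : ContinuousOn g (Icc 0 1)) (hpos : ∀ t ∈ Icc 0 1, 0 < g t) :
    ContinuousOn (fun x ↦ x ᵥ* reweight C (g ∘ x)) (stdSimplex ℝ ι) := by
  have hgk (k : ι) : ContinuousOn (fun x : ι → ℝ ↦ g (x k)) (stdSimplex ℝ ι) :=
    hg.comp (continuous_apply k).continuousOn fun x hx ↦ mem_Icc_of_mem_stdSimplex hx k
  refine continuousOn_pi.2 fun j ↦ continuousOn_finsetSum _ fun i _ ↦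
    (continuous_apply i).continuousOn.mul <| (continuousOn_const.mul (hgk j)).div
      (continuousOn_finsetSum _ fun k _ ↦ continuousOn_const.mul (hgk k)) fun x hx ↦ ?_
  exact (sum_mul_pos_of_pos_column hC hcol
    (fun k ↦ hpos _ (mem_Icc_of_mem_stdSimplex hx k)) i).ne'

theorem exists_mem_nearVertex_vecMul_reweight_eq (hC : ∀ i j, 0 ≤ C i j)
    (hcol : ∀ i, 0 < C i i₀) {g : ℝ → ℝ} (hg : ContinuousOn g (Icc 0 1))
    (hpos : ∀ t ∈ Icc 0 1, 0 < g t) {q ε : ℝ} (hq : 0 ≤ q) (hε : 0 ≤ ε)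
    (hgq : ∀ x ∈ nearVertex i₀ ε, ∀ k ≠ i₀, g (x k) ≤ q * g (x i₀))
    (hqC : ∀ i, q * ∑ k, C i k ≤ ε * C i i₀) :
    ∃ x ∈ nearVertex i₀ ε, x ᵥ* reweight C (g ∘ x) = x := by
  refine exists_isFixedPt_of_isCompact_of_convex (f := fun x ↦ x ᵥ* reweight C (g ∘ x))
    (isCompact_nearVertex i₀ ε) (convex_nearVertex i₀ ε) (nearVertex_nonempty i₀ hε)
    ((continuousOn_vecMul_reweight hC hcol hg hpos).mono fun x hx ↦ hx.1) fun x hx ↦ ?_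
  exact vecMul_mem_of_convex (convex_nearVertex i₀ ε) hx.1 fun i ↦
    reweight_mem_nearVertex hC hcol (fun k ↦ hpos _ (mem_Icc_of_mem_stdSimplex hx.1 k)) hq hε
      (hgq x hx) (hqC i)

theorem apply_le_exp_mul_apply_of_mem_nearVertex {g g' : ℝ → ℝ} {δ ε : ℝ} (hδ : 0 ≤ δ)
    (hε : ε ≤ 1 / 2) (hderiv : ∀ t ∈ Icc 0 1, HasDerivWithinAt g (g' t) (Icc 0 1) t)
    (hpos : ∀ t ∈ Icc 0 1, 0 < g t) (hratio : ∀ t ∈ Icc 0 1, δ ≤ g' t / g t) {x : ι → ℝ}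
    (hx : x ∈ nearVertex i₀ ε) {k : ι} (hk : k ≠ i₀) :
    g (x k) ≤ Real.exp (-(δ * (1 - 2 * ε))) * g (x i₀) := by
  have hxk : x k ∈ Icc (0 : ℝ) 1 := mem_Icc_of_mem_stdSimplex hx.1 k
  have hx₀ : x i₀ ∈ Icc (0 : ℝ) 1 := mem_Icc_of_mem_stdSimplex hx.1 i₀
  have hgap : 1 - 2 * ε ≤ x i₀ - x k := by linarith [apply_le_of_mem_nearVertex hx hk, hx.2]
  have hIoo : Ioo (x k) (x i₀) ⊆ Ioo 0 1 := Ioo_subset_Ioo hxk.1 hx₀.2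
  have hgrowth : g (x k) ≤ Real.exp (-(δ * (x i₀ - x k))) * g (x i₀) := by
    refine le_exp_neg_mul_of_mul_le_deriv (g' := g') (by linarith) ?_ (fun t ht ↦ ?_) fun t ht ↦ ?_
    · exact fun t ht ↦ ((hderiv t (Icc_subset_Icc hxk.1 hx₀.2 ht)).continuousWithinAt).mono
        (Icc_subset_Icc hxk.1 hx₀.2)
    · exact (hderiv t (Ioo_subset_Icc_self (hIoo ht))).hasDerivAt
        (Icc_mem_nhds (hIoo ht).1 (hIoo ht).2)
    · have ht01 := Ioo_subset_Icc_self (hIoo ht)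
      exact (le_div_iff₀ (hpos t ht01)).1 (hratio t ht01)
  refine hgrowth.trans (mul_le_mul_of_nonneg_right ?_ (hpos _ hx₀).le)
  exact Real.exp_le_exp.2 (neg_le_neg (mul_le_mul_of_nonneg_left hgap hδ))

theorem fixed_point_near_vertex_first_column_positive_general (hC : ∀ i j, 0 ≤ C i j)
    (hcol : ∀ i, 0 < C i i₀) {ε : ℝ} (hε : 0 < ε) :
    ∃ δ > 0, ∀ g g' : ℝ → ℝ, (∀ t ∈ Icc 0 1, HasDerivWithinAt g (g' t) (Icc 0 1) t) →
      (∀ t ∈ Icc 0 1, 0 < g t) → (∀ t ∈ Icc 0 1, δ ≤ g' t / g t) →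
        ∃ x ∈ nearVertex i₀ ε, x ᵥ* reweight C (g ∘ x) = x := by
  let η : ℝ := min ε (1 / 4)
  have hη : 0 < η := lt_min hε (by norm_num)
  have hη' : η ≤ 1 / 4 := min_le_right ε _
  obtain ⟨δ, hδ, hδC⟩ := exists_pos_forall_exp_neg_mul_mul_le (fun i ↦ ∑ k, C i k)
    (fun i ↦ mul_pos hη (hcol i)) (c := 1 - 2 * η) (by linarith)
  refine ⟨δ, hδ, fun g g' hderiv hpos hratio ↦ ?_⟩
  obtain ⟨x, hx, hfix⟩ := exists_mem_nearVertex_vecMul_reweight_eq hC hcol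
    (fun t ht ↦ (hderiv t ht).continuousWithinAt) hpos (Real.exp_pos _).le hη.le
    (fun x hx k hk ↦ apply_le_exp_mul_apply_of_mem_nearVertex hδ.le (by linarith) hderiv hpos
      hratio hx hk) hδC
  exact ⟨x, nearVertex_subset_nearVertex i₀ (min_le_left ε _) hx, hfix⟩

end Markov

/-- If the first column of the irreducible matrix `C` is positive then, for every
`0 < ε < 1/2`, for `L⁻(g)` large enough (depending only on `C` and `ε`), the map
`u_g` has a fixed point in `Σ_ε = {x ∈ Σ : x₁ ≥ 1 − ε}`. -/
theorem fixed_point_near_vertex_first_column_positive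
    (n : ℕ) (C : Matrix (Fin (n+1)) (Fin (n+1)) ℝ)
    (hC0 : ∀ i j, 0 ≤ C i j) (hCirr : IsIrred C)
    (hcol : ∀ i, 0 < C i 0)
    (ε : ℝ) (hε0 : 0 < ε) (hε1 : ε < 1/2) :
    ∃ δ : ℝ, 0 < δ ∧
      ∀ g g' : ℝ → ℝ, ∀ Lm : ℝ, IsAdmissible g g' →
        IsLeast (ratioSet g g') Lm → δ ≤ Lm →
        ∀ u : (Fin (n+1) → ℝ) → (Fin (n+1) → ℝ),
          (∀ x ∈ stdSimplex ℝ (Fin (n+1)), u x ∈ stdSimplex ℝ (Fin (n+1)) ∧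
            Matrix.vecMul (u x) (Mg C g x) = u x ∧
            ∀ v ∈ stdSimplex ℝ (Fin (n+1)), Matrix.vecMul v (Mg C g x) = v → v = u x) →
          ∃ x ∈ stdSimplex ℝ (Fin (n+1)), 1 - ε ≤ x 0 ∧ u x = x := by
  obtain ⟨δ, hδ, hfix⟩ := fixed_point_near_vertex_first_column_positive_general hC0 hcol hε0
  refine ⟨δ, hδ, fun g g' Lm hg hLm hδLm u hu ↦ ?_⟩
  obtain ⟨x, ⟨hx, hx0⟩, hxfix⟩ := hfix g g' hg.1 hg.2.2.2.1 fun t ht ↦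
    hδLm.trans (hLm.2 (mem_image_of_mem _ ht))
  exact ⟨x, hx, hx0, ((hu x hx).2.2 x hx hxfix).symm⟩
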